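/- Global rate comparison: assume 0 ≤ α < m, X has full rank m ≥ 2, and w* ∈ Ω is a global maximizer of det M(w) over Ω̄ with all coordinates positive. If r(0) ≥ 2α/m, then 1 − r(α) = (m/(m − α))·(1 − r(0)), and consequently r(α) ≤ r(0). -/

import Mathlib

open Matrix Filter

/-- The information matrix `M(w) = ∑ i, w_i x_i x_iᵀ`. -/
noncomputable def Mmat {n m : ℕ} (x : Fin n → Fin m → ℝ) (w : Fin n → ℝ) :
    Matrix (Fin m) (Fin m) ℝ :=
  ∑ i, w i • Matrix.vecMulVec (x i) (x i)

/-- The multiplicative update map `T_α(w)_i = w_i (x_iᵀ M(w)⁻¹ x_i − α)/(m − α)`. -/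
noncomputable def Talg {n m : ℕ} (x : Fin n → Fin m → ℝ) (α : ℝ) (w : Fin n → ℝ) :
    Fin n → ℝ :=
  fun i => w i * ((x i ⬝ᵥ (Mmat x w)⁻¹ *ᵥ x i) - α) / ((m : ℝ) - α)

/-- The coordinate-sum linear functional on `ℂⁿ`. -/
noncomputable def sumLM (n : ℕ) : (Fin n → ℂ) →ₗ[ℂ] ℂ where
  toFun γ := ∑ i, γ i
  map_add' a b := by simp [Finset.sum_add_distrib]
  map_smul' c a := by simp [Finset.mul_sum]

/-- The zero-sum subspace `Γ = {γ : ∑ i, γ_i = 0}` (complexified). -/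
noncomputable def Gam (n : ℕ) : Submodule ℂ (Fin n → ℂ) := LinearMap.ker (sumLM n)

/-- The global rate of convergence: the spectral radius of the matrix `R`, viewed (after
complexification) as a linear map restricted to the zero-sum subspace `Γ`. -/
noncomputable def globalRate {n : ℕ} (R : Matrix (Fin n) (Fin n) ℝ)
    (h : ∀ γ ∈ Gam n, Matrix.toLin' (R.map (Complex.ofReal : ℝ → ℂ)) γ ∈ Gam n) : ℝ :=
  sSup ((fun μ : ℂ => ‖μ‖) ''
    spectrum ℂ ((Matrix.toLin' (R.map (Complex.ofReal : ℝ → ℂ))).restrict h))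


theorem Mmat_quad {n m : ℕ} (x : Fin n → Fin m → ℝ) (w : Fin n → ℝ) (v : Fin m → ℝ) :
    v ⬝ᵥ (Mmat x w *ᵥ v) = ∑ i, w i * (x i ⬝ᵥ v) ^ 2 := by
  simp only [Mmat, Matrix.sum_mulVec, dotProduct_sum, Matrix.smul_mulVec, dotProduct_smul,
    Matrix.vecMulVec_mulVec, smul_eq_mul]
  refine Finset.sum_congr rfl fun i _ => ?_
  simp [dotProduct_comm v (x i)]
  left
  ring

theorem Mmat_symm {n m : ℕ} (x : Fin n → Fin m → ℝ) (w : Fin n → ℝ) :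
    (Mmat x w)ᵀ = Mmat x w := by
  simp [Mmat, Matrix.transpose_sum, Matrix.transpose_vecMulVec]

theorem Mmat_posDef {n m : ℕ} (x : Fin n → Fin m → ℝ) (hrank : (Matrix.of x).rank = m)
    (w : Fin n → ℝ) (hpos : ∀ i, 0 < w i) : (Mmat x w).PosDef := by
  refine Matrix.PosDef.of_dotProduct_mulVec_pos ?_ ?_
  · rw [Matrix.IsHermitian, Matrix.conjTranspose_eq_transpose_of_trivial, Mmat_symm]
  · intro v hv
    have hs : star v = v := by ext; simp
    rw [hs, Mmat_quad]
    have hnn : ∀ i ∈ Finset.univ, 0 ≤ w i * (x i ⬝ᵥ v) ^ 2 := fun i _ =>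
      mul_nonneg (hpos i).le (sq_nonneg _)
    refine lt_of_le_of_ne (Finset.sum_nonneg hnn) fun h => hv ?_
    have h0 := (Finset.sum_eq_zero_iff_of_nonneg hnn).1 h.symm
    have h1 : (Matrix.of x) *ᵥ v = 0 := by
      ext i
      have := h0 i (Finset.mem_univ i)
      have h2 : x i ⬝ᵥ v = 0 := by
        rcases mul_eq_zero.1 this with h | h
        · exact absurd h (hpos i).ne'
        · exact pow_eq_zero_iff (two_ne_zero) |>.1 h
      simpa [Matrix.mulVec] using h2
    have hinj : Function.Injective (Matrix.of x).mulVecLin := by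
      rw [← LinearMap.ker_eq_bot]
      have := LinearMap.finrank_range_add_finrank_ker (Matrix.of x).mulVecLin
      rw [← Matrix.rank, hrank] at this
      simp at this
      exact this
    exact hinj (by simpa using h1)

/-- Adding mass `t` at coordinate `j`. -/
theorem Mmat_add {n m : ℕ} (x : Fin n → Fin m → ℝ) (w : Fin n → ℝ) (c t : ℝ) (j : Fin n) :
    Mmat x (c • w + t • Pi.single j 1) = c • Mmat x w + t • Matrix.vecMulVec (x j) (x j) := by
  simp [Mmat, add_smul, Finset.sum_add_distrib, Finset.smul_sum, smul_smul, Pi.single_apply,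
    ite_smul]

theorem det_rank_one {m : ℕ} (A : Matrix (Fin m) (Fin m) ℝ) (hA : IsUnit A.det) (y : Fin m → ℝ)
    (c t : ℝ) (hc : c ≠ 0) : (c • A + t • Matrix.vecMulVec y y).det * c =
      c ^ m * A.det * (c + t * (y ⬝ᵥ A⁻¹ *ᵥ y)) := by
  have h1 : c • A + t • Matrix.vecMulVec y y = c • (A + replicateCol (Fin 1) ((t / c) • y) * replicateRow (Fin 1) y) := by
    rw [smul_add]
    ext i j
    simp [Matrix.vecMulVec_apply, Matrix.mul_apply]
    field_simp
  rw [h1, det_smul, det_add_mul _ _ hA, Matrix.det_fin_one]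
  simp only [Fintype.card_fin]
  have : (1 + replicateRow (Fin 1) y * A⁻¹ * replicateCol (Fin 1) ((t / c) • y) :
      Matrix (Fin 1) (Fin 1) ℝ) 0 0 = 1 + (t / c) * (y ⬝ᵥ A⁻¹ *ᵥ y) := by
    rw [Matrix.mul_assoc, ← Matrix.replicateCol_mulVec, Matrix.mulVec_smul]
    simp [Matrix.mul_apply, dotProduct, Finset.mul_sum]
  rw [this]
  field_simp

theorem sherman {m : ℕ} (A : Matrix (Fin m) (Fin m) ℝ) (hA : IsUnit A.det) (hS : Aᵀ = A) (y : Fin m → ℝ)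
    (t : ℝ) (ht : 1 + t * (y ⬝ᵥ A⁻¹ *ᵥ y) ≠ 0) :
    (A + t • Matrix.vecMulVec y y)⁻¹ =
      A⁻¹ - (t / (1 + t * (y ⬝ᵥ A⁻¹ *ᵥ y))) • Matrix.vecMulVec (A⁻¹ *ᵥ y) (A⁻¹ *ᵥ y) := by
  apply Matrix.inv_eq_right_inv
  have hS' : A⁻¹ᵀ = A⁻¹ := by rw [Matrix.transpose_nonsing_inv, hS]
  have hv : y ᵥ* A⁻¹ = A⁻¹ *ᵥ y := by
    rw [← Matrix.mulVec_transpose, hS']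
  rw [Matrix.add_mul, Matrix.mul_sub, Matrix.mul_sub, Matrix.mul_nonsing_inv _ hA,
    Matrix.mul_smul, Matrix.mul_vecMulVec, Matrix.mulVec_mulVec, Matrix.mul_nonsing_inv _ hA,
    Matrix.one_mulVec, Matrix.smul_mul, Matrix.vecMulVec_mul, hv, Matrix.smul_mul, Matrix.mul_smul,
    Matrix.vecMulVec_mul_vecMulVec]
  ext i j
  simp [Matrix.vecMulVec_apply]
  field_simp
  ring

/-- The Gram-type kernel. -/
noncomputable def gker {n m : ℕ} (x : Fin n → Fin m → ℝ) (w : Fin n → ℝ) (i j : Fin n) : ℝ :=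
  x i ⬝ᵥ (Mmat x w)⁻¹ *ᵥ x j

theorem gker_symm {n m : ℕ} (x : Fin n → Fin m → ℝ) (w : Fin n → ℝ) (i j : Fin n) :
    gker x w i j = gker x w j i := by
  unfold gker
  rw [Matrix.dotProduct_mulVec, ← Matrix.mulVec_transpose, Matrix.transpose_nonsing_inv, Mmat_symm,
    dotProduct_comm]

theorem gker_repr {n m : ℕ} (x : Fin n → Fin m → ℝ) (w : Fin n → ℝ)
    (hu : IsUnit (Mmat x w).det) (i j : Fin n) :
    gker x w i j = ∑ k, w k * (gker x w i k * gker x w j k) := by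
  have h : (Mmat x w)⁻¹ *ᵥ x j = (Mmat x w)⁻¹ *ᵥ (Mmat x w *ᵥ ((Mmat x w)⁻¹ *ᵥ x j)) := by
    rw [Matrix.mulVec_mulVec, Matrix.mulVec_mulVec, Matrix.nonsing_inv_mul _ hu, Matrix.one_mul]
  rw [gker, h]
  nth_rewrite 2 [Mmat]
  simp only [Matrix.sum_mulVec, Matrix.mulVec_sum, dotProduct_sum, Matrix.smul_mulVec,
    dotProduct_smul, Matrix.mulVec_smul, Matrix.vecMulVec_mulVec, smul_eq_mul]
  refine Finset.sum_congr rfl fun k _ => ?_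
  rw [gker_symm x w j k]
  simp only [gker]
  simp

theorem gker_trace {n m : ℕ} (x : Fin n → Fin m → ℝ) (w : Fin n → ℝ)
    (hu : IsUnit (Mmat x w).det) : ∑ i, w i * gker x w i i = m := by
  have : ((Mmat x w)⁻¹ * Mmat x w).trace = m := by
    rw [Matrix.nonsing_inv_mul _ hu]; simp
  rw [← this]
  have e : ((Mmat x w)⁻¹ * Mmat x w) =
      (Mmat x w)⁻¹ * ∑ i, w i • Matrix.vecMulVec (x i) (x i) := rfl
  rw [e]
  simp only [Matrix.mul_sum, Matrix.trace_sum, Matrix.mul_smul, Matrix.trace_smul, smul_eq_mul,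
    Matrix.mul_vecMulVec, Matrix.trace_vecMulVec]
  refine Finset.sum_congr rfl fun k _ => ?_
  rw [gker, dotProduct_comm]

theorem gker_diag {n m : ℕ} (hm : 2 ≤ m)
    (x : Fin n → Fin m → ℝ) (hrank : (Matrix.of x).rank = m)
    (w : Fin n → ℝ) (hpos : ∀ i, 0 < w i) (hsum : ∑ i, w i = 1)
    (hopt : ∀ v : Fin n → ℝ, (∀ i, 0 ≤ v i) → ∑ i, v i = 1 →
      (Mmat x v).det ≤ (Mmat x w).det) (i : Fin n) : gker x w i i = m := by
  have hpd := Mmat_posDef x hrank w hpos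
  have hdet := hpd.det_pos
  have hu : IsUnit (Mmat x w).det := hdet.ne'.isUnit
  have hle : ∀ i, gker x w i i ≤ m := by
    intro i
    by_contra! hlt
    have hmR : (2:ℝ) ≤ m := by exact_mod_cast hm
    set d := gker x w i i with hd
    have key : ∀ t : ℝ, 0 < t → t < 1 → d - m ≤ (m - 1) * (d - 1) * t := by
      intro t ht0 ht1
      have h1 := hopt ((1 - t) • w + t • Pi.single i 1) (by
        intro k
        have := hpos k
        have h2 : 0 ≤ (1 - t) * w k := mul_nonneg (by linarith) this.le
        by_cases hk : k = i
        · subst hk; simp; linarith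
        · simp [hk]; exact h2) (by
        simp [Finset.sum_add_distrib, ← Finset.mul_sum, hsum])
      rw [Mmat_add] at h1
      have hc : (1 - t) ≠ 0 := by linarith
      have h2 := det_rank_one (Mmat x w) hu (x i) (1 - t) t hc
      rw [← gker, ← hd] at h2
      obtain ⟨k, rfl⟩ : ∃ k, m = k + 1 := ⟨m - 1, by omega⟩
      have h3 : (1 - t) ^ k * (1 - t + t * d) ≤ 1 := by
        have hcp : 0 < 1 - t := by linarith
        have : (1 - t) * (Mmat x w).det * ((1 - t) ^ k * (1 - t + t * d)) ≤
            (1 - t) * (Mmat x w).det * 1 := by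
          calc _ = (1 - t) ^ (k+1) * (Mmat x w).det * (1 - t + t * d) := by ring
            _ = _ := h2.symm
            _ ≤ (Mmat x w).det * (1 - t) := by gcongr
            _ = _ := by ring
        exact le_of_mul_le_mul_left this (by positivity)
      have h4 : 1 + (k:ℝ) * (-t) ≤ (1 + -t) ^ k := one_add_mul_le_pow (by linarith) k
      push_cast at *
      have h5 : (1 - k * t) * (1 - t + t * d) ≤ 1 := by
        refine le_trans (mul_le_mul_of_nonneg_right ?_ ?_) h3
        · calc _ = 1 + (k:ℝ) * (-t) := by ring
            _ ≤ _ := h4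
            _ = _ := by ring
        · nlinarith
      have h6 : t * (d - (k + 1)) ≤ t * ((k + 1 - 1) * (d - 1) * t) := by nlinarith
      exact le_of_mul_le_mul_left h6 ht0
    have hD : 0 < (m - 1) * (d - 1) := mul_pos (by linarith) (by linarith)
    set D := (m - 1) * (d - 1) with hDd
    have hDm : d - m ≤ D := by nlinarith
    have := key ((d - m) / (2 * D)) (div_pos (by linarith) (by linarith)) (by
      rw [div_lt_one (by linarith)]; linarith)
    have h7 : D * ((d - m) / (2 * D)) = (d - m) / 2 := by field_simp
    linarith
  have ht := gker_trace x w hu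
  have hz : ∑ i, w i * (m - gker x w i i) = 0 := by
    simp [mul_sub, Finset.sum_sub_distrib, ht, ← Finset.sum_mul, hsum]
  have := (Finset.sum_eq_zero_iff_of_nonneg (fun i _ => mul_nonneg (hpos i).le
    (sub_nonneg.2 (hle i)))).1 hz i (Finset.mem_univ i)
  rcases mul_eq_zero.1 this with h | h
  · exact absurd h (hpos i).ne'
  · linarith

theorem R0_entry {n m : ℕ} (hm : 2 ≤ m) (x : Fin n → Fin m → ℝ) (w : Fin n → ℝ)
    (hu : IsUnit (Mmat x w).det) (hd : ∀ i, gker x w i i = m)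
    (R0 : Matrix (Fin n) (Fin n) ℝ)
    (hR0 : HasFDerivAt (Talg x 0)
      (LinearMap.toContinuousLinearMap (Matrix.toLin' R0)) w) (i j : Fin n) :
    R0 i j = (1 : Matrix (Fin n) (Fin n) ℝ) i j - w i * gker x w i j ^ 2 / m := by
  have hmR : (m:ℝ) ≠ 0 := by
    have : m ≠ 0 := by omega
    exact_mod_cast this
  have hline : HasDerivAt (fun t : ℝ => w + t • (Pi.single j 1 : Fin n → ℝ)) (Pi.single j 1) 0 := by
    simpa using ((hasDerivAt_id (0:ℝ)).smul_const (Pi.single j 1 : Fin n → ℝ)).const_add w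
  have hR0' : HasFDerivAt (Talg x 0) (LinearMap.toContinuousLinearMap (Matrix.toLin' R0))
      (w + (0:ℝ) • (Pi.single j 1 : Fin n → ℝ)) := by simpa using hR0
  have h1 : HasDerivAt (fun t : ℝ => Talg x 0 (w + t • (Pi.single j 1 : Fin n → ℝ)))
      (LinearMap.toContinuousLinearMap (Matrix.toLin' R0) (Pi.single j 1)) 0 :=
    HasFDerivAt.comp_hasDerivAt (l := Talg x 0) (0:ℝ) hR0' hline
  have h2 := (hasDerivAt_pi.1 h1) i
  have h3 : (LinearMap.toContinuousLinearMap (Matrix.toLin' R0) (Pi.single j 1)) i = R0 i j := by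
    simp
  rw [h3] at h2
  have hone : (Pi.single j (1:ℝ) : Fin n → ℝ) i = (1 : Matrix (Fin n) (Fin n) ℝ) i j := by
    simp [Pi.single_apply, Matrix.one_apply]
  have hev : (fun t : ℝ => Talg x 0 (w + t • (Pi.single j 1 : Fin n → ℝ)) i) =ᶠ[nhds 0]
      fun t => (w i + t * (1 : Matrix (Fin n) (Fin n) ℝ) i j) *
        (m - t / (1 + t * m) * gker x w i j ^ 2) / m := by
    have hne : ∀ᶠ t : ℝ in nhds 0, 1 + t * m ≠ 0 := by
      have : ContinuousAt (fun t : ℝ => 1 + t * (m:ℝ)) 0 := by fun_prop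
      exact this.eventually_ne (by simp)
    filter_upwards [hne] with t ht
    have hadd := Mmat_add x w 1 t j
    rw [one_smul, one_smul] at hadd
    have hjj : x j ⬝ᵥ (Mmat x w)⁻¹ *ᵥ x j = m := hd j
    have hii : x i ⬝ᵥ (Mmat x w)⁻¹ *ᵥ x i = m := hd i
    have hs := sherman (Mmat x w) hu (Mmat_symm x w) (x j) t (by rw [hjj]; exact ht)
    rw [hjj] at hs
    simp only [Talg]
    rw [hadd, hs, Matrix.sub_mulVec, dotProduct_sub, hii, Matrix.smul_mulVec, dotProduct_smul,
      Matrix.vecMulVec_mulVec]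
    simp only [Pi.add_apply, Pi.smul_apply, smul_eq_mul, hone, sub_zero]
    have : (x i ⬝ᵥ MulOpposite.op (((Mmat x w)⁻¹ *ᵥ x j) ⬝ᵥ x i) • (Mmat x w)⁻¹ *ᵥ x j) =
        gker x w i j ^ 2 := by
      rw [dotProduct_smul, dotProduct_comm _ (x i), gker]
      simp [sq]
    rw [this]
  have h4 := h2.congr_of_eventuallyEq hev.symm
  have h5 : HasDerivAt (fun t : ℝ => (w i + t * (1 : Matrix (Fin n) (Fin n) ℝ) i j) *
        (m - t / (1 + t * m) * gker x w i j ^ 2) / m)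
      ((1 : Matrix (Fin n) (Fin n) ℝ) i j - w i * gker x w i j ^ 2 / m) 0 := by
    have ha : HasDerivAt (fun t : ℝ => w i + t * (1 : Matrix (Fin n) (Fin n) ℝ) i j)
        ((1 : Matrix (Fin n) (Fin n) ℝ) i j) 0 := by
      simpa using ((hasDerivAt_id (0:ℝ)).mul_const ((1 : Matrix (Fin n) (Fin n) ℝ) i j)).const_add (w i)
    have hb : HasDerivAt (fun t : ℝ => 1 + t * (m:ℝ)) (m:ℝ) 0 := by
      simpa using ((hasDerivAt_id (0:ℝ)).mul_const (m:ℝ)).const_add 1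
    have hc := (((hasDerivAt_id (0:ℝ)).div hb (by simp)).mul_const (gker x w i j ^ 2)).const_sub (m:ℝ)
    have := (ha.mul hc).div_const (m:ℝ)
    refine HasDerivAt.congr_deriv (f' := _) this ?_
    simp
    field_simp
    ring
  exact h4.unique h5

theorem Ralpha_eq {n m : ℕ} (hm : 2 ≤ m) (x : Fin n → Fin m → ℝ) (w : Fin n → ℝ)
    (α : ℝ) (hαm : α < m) (Rα R0 : Matrix (Fin n) (Fin n) ℝ)
    (hRα : HasFDerivAt (Talg x α)
      (LinearMap.toContinuousLinearMap (Matrix.toLin' Rα)) w)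
    (hR0 : HasFDerivAt (Talg x 0)
      (LinearMap.toContinuousLinearMap (Matrix.toLin' R0)) w) :
    Rα = (1 - (m:ℝ) / (m - α)) • (1 : Matrix (Fin n) (Fin n) ℝ) + ((m:ℝ) / (m - α)) • R0 := by
  have hmR : (m:ℝ) ≠ 0 := by
    have : m ≠ 0 := by omega
    exact_mod_cast this
  have hne : (m:ℝ) - α ≠ 0 := by linarith
  have hfun : Talg x α = fun v => (1 - (m:ℝ) / (m - α)) • v + ((m:ℝ) / (m - α)) • Talg x 0 v := by
    funext v i
    simp only [Talg, Pi.add_apply, Pi.smul_apply, smul_eq_mul]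
    field_simp
    ring
  have h1 := ((hasFDerivAt_id (𝕜 := ℝ) w).const_smul (1 - (m:ℝ) / (m - α))).add
    (hR0.const_smul ((m:ℝ) / (m - α)))
  rw [hfun] at hRα
  have h3 := hRα.unique h1
  ext i j
  have h4 := congrFun (congrArg (fun L => L (Pi.single j (1:ℝ))) h3) i
  simpa [Pi.single_apply, Matrix.one_apply] using h4

theorem Gam_nontrivial {n : ℕ} (hn : 2 ≤ n) : Nontrivial (Gam n) := by
  let i0 : Fin n := ⟨0, by omega⟩
  let i1 : Fin n := ⟨1, by omega⟩
  have h01 : i0 ≠ i1 := by simp [i0, i1]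
  refine ⟨⟨⟨Pi.single i0 1 - Pi.single i1 1, ?_⟩, 0, ?_⟩⟩
  · simp [Gam, sumLM]
  · intro h
    have := congrFun (congrArg Subtype.val h) i0
    simp [h01] at this

/-- Spectral facts for the scalar kernel. -/
theorem eig_real {n m : ℕ} (hm : 2 ≤ m) (w : Fin n → ℝ) (hpos : ∀ i, 0 < w i)
    (g : Fin n → Fin n → ℝ)
    (hrepr : ∀ i j, g i j = ∑ k, w k * (g i k * g j k)) (hd : ∀ i, g i i = m)
    (hsymm : ∀ i j, g i j = g j i)
    (v : Fin n → ℂ) (hv : v ≠ 0) (lam : ℂ)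
    (h : ∀ i, ∑ j, ((w i * g i j ^ 2 / m : ℝ) : ℂ) * v j = lam * v i) :
    ∃ s : ℝ, 0 ≤ s ∧ s ≤ 1 ∧ lam = s := by
  have hmR : (0:ℝ) < m := by
    have : 0 < m := by omega
    exact_mod_cast this
  obtain ⟨i0, hi0⟩ : ∃ i, v i ≠ 0 := by
    by_contra! hh
    exact hv (funext hh)
  -- norm bound
  have hnorm : ‖lam‖ ≤ 1 := by
    have hcol : ∀ j, ∑ i, w i * g i j ^ 2 / m = 1 := by
      intro j
      have h1 := hrepr j j
      rw [hd j] at h1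
      rw [← Finset.sum_div, div_eq_one_iff_eq hmR.ne']
      rw [h1]
      exact Finset.sum_congr rfl fun k _ => by rw [hsymm k j]; ring
    have h1 : ∑ i, ‖lam‖ * ‖v i‖ ≤ ∑ j, ‖v j‖ := by
      calc ∑ i, ‖lam‖ * ‖v i‖ = ∑ i, ‖∑ j, ((w i * g i j ^ 2 / m : ℝ) : ℂ) * v j‖ := by
            refine Finset.sum_congr rfl fun i _ => by rw [h i, norm_mul]
        _ ≤ ∑ i, ∑ j, (w i * g i j ^ 2 / m) * ‖v j‖ := by
            refine Finset.sum_le_sum fun i _ => (norm_sum_le _ _).trans (le_of_eq ?_)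
            refine Finset.sum_congr rfl fun j _ => ?_
            rw [norm_mul, Complex.norm_real, Real.norm_of_nonneg]
            have := hpos i
            positivity
        _ = ∑ j, (∑ i, w i * g i j ^ 2 / m) * ‖v j‖ := by
            rw [Finset.sum_comm]
            exact Finset.sum_congr rfl fun j _ => by rw [Finset.sum_mul]
        _ = _ := by simp [hcol]
    have hS : 0 < ∑ j, ‖v j‖ :=
      Finset.sum_pos' (fun _ _ => norm_nonneg _) ⟨i0, Finset.mem_univ _, norm_pos_iff.2 hi0⟩
    rw [← Finset.mul_sum] at h1
    by_contra! hlt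
    nlinarith
  -- Rayleigh quotient
  set Q : ℝ := ∑ k, ∑ l, w k * w l * Complex.normSq (∑ j, ((g j k * g j l : ℝ) : ℂ) * v j) with hQ
  set N : ℝ := ∑ i, Complex.normSq (v i) / w i with hN
  have hQ0 : 0 ≤ Q := Finset.sum_nonneg fun k _ => Finset.sum_nonneg fun l _ =>
    mul_nonneg (mul_nonneg (hpos k).le (hpos l).le) (Complex.normSq_nonneg _)
  have hN0 : 0 < N := Finset.sum_pos' (fun i _ => div_nonneg (Complex.normSq_nonneg _) (hpos i).le)
    ⟨i0, Finset.mem_univ _, div_pos (Complex.normSq_pos.2 hi0) (hpos i0)⟩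
  have hA : ∑ i, ∑ j, (starRingEnd ℂ) (v i) * ((g i j ^ 2 : ℝ) : ℂ) * v j = Q := by
    have e : ∀ i j, g i j ^ 2 = ∑ k, ∑ l, w k * w l * ((g i k * g i l) * (g j k * g j l)) := by
      intro i j
      rw [sq]
      nth_rewrite 1 [hrepr i j]
      rw [hrepr i j, Finset.sum_mul_sum]
      exact Finset.sum_congr rfl fun k _ => Finset.sum_congr rfl fun l _ => by ring
    have e2 : (Q : ℂ) = ∑ k, ∑ l, ∑ i, ∑ j, (starRingEnd ℂ) (v i) *
        ((w k * w l * ((g i k * g i l) * (g j k * g j l)) : ℝ) : ℂ) * v j := by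
      rw [hQ]
      push_cast
      refine Finset.sum_congr rfl fun k _ => Finset.sum_congr rfl fun l _ => ?_
      rw [Complex.normSq_eq_conj_mul_self, map_sum, Finset.sum_mul_sum, Finset.mul_sum]
      refine Finset.sum_congr rfl fun i _ => ?_
      rw [Finset.mul_sum]
      refine Finset.sum_congr rfl fun j _ => ?_
      simp only [map_mul, Complex.conj_ofReal]
      ring
    rw [e2]
    have e3 : ∀ F : Fin n → Fin n → Fin n → Fin n → ℂ,
        ∑ i, ∑ j, ∑ k, ∑ l, F i j k l = ∑ k, ∑ l, ∑ i, ∑ j, F i j k l := by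
      intro F
      calc _ = ∑ i, ∑ k, ∑ j, ∑ l, F i j k l :=
            Finset.sum_congr rfl fun i _ => Finset.sum_comm
        _ = ∑ k, ∑ i, ∑ j, ∑ l, F i j k l := Finset.sum_comm
        _ = ∑ k, ∑ i, ∑ l, ∑ j, F i j k l :=
            Finset.sum_congr rfl fun k _ => Finset.sum_congr rfl fun i _ => Finset.sum_comm
        _ = _ := Finset.sum_congr rfl fun k _ => Finset.sum_comm
    rw [← e3]
    refine Finset.sum_congr rfl fun i _ => Finset.sum_congr rfl fun j _ => ?_
    rw [e i j]
    push_cast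
    simp only [Finset.mul_sum, Finset.sum_mul]
  have hB : ∑ i, ∑ j, (starRingEnd ℂ) (v i) * ((g i j ^ 2 : ℝ) : ℂ) * v j = m * lam * N := by
    rw [hN, Complex.ofReal_sum, Finset.mul_sum]
    refine Finset.sum_congr rfl fun i _ => ?_
    have hw : (w i : ℂ) ≠ 0 := by exact_mod_cast (hpos i).ne'
    have hmC : (m : ℂ) ≠ 0 := by exact_mod_cast hmR.ne'
    have : ∑ j, (starRingEnd ℂ) (v i) * ((g i j ^ 2 : ℝ) : ℂ) * v j =
        (starRingEnd ℂ) (v i) * (m / w i) * ∑ j, ((w i * g i j ^ 2 / m : ℝ) : ℂ) * v j := by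
      rw [Finset.mul_sum]
      refine Finset.sum_congr rfl fun j _ => ?_
      push_cast
      field_simp
    rw [this, h i, Complex.ofReal_div, Complex.normSq_eq_conj_mul_self]
    field_simp
  have hlam : lam = ((Q / (m * N) : ℝ) : ℂ) := by
    have hmC : (m : ℂ) ≠ 0 := by exact_mod_cast hmR.ne'
    have hNC : (N : ℂ) ≠ 0 := by exact_mod_cast hN0.ne'
    push_cast
    rw [eq_div_iff (mul_ne_zero hmC hNC), ← hA, hB]
    ring
  refine ⟨_, by positivity, ?_, hlam⟩
  rw [hlam, Complex.norm_real] at hnorm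
  exact (le_abs_self _).trans hnorm

theorem rate_abstract {V : Type*} [AddCommGroup V] [Module ℂ V] [FiniteDimensional ℂ V]
    [Nontrivial V] (f g : Module.End ℂ V) (m α : ℝ) (hα0 : 0 ≤ α) (hαm : α < m)
    (hfg : ∀ v, f v = ((1 - m / (m - α) : ℝ) : ℂ) • v + ((m / (m - α) : ℝ) : ℂ) • g v)
    (hg : ∀ μ ∈ spectrum ℂ g, ∃ s : ℝ, 0 ≤ s ∧ s ≤ 1 ∧ μ = s)
    (hbig : 2 * α / m ≤ sSup ((fun μ : ℂ => ‖μ‖) '' spectrum ℂ g)) :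
    1 - sSup ((fun μ : ℂ => ‖μ‖) '' spectrum ℂ f) =
        (m / (m - α)) * (1 - sSup ((fun μ : ℂ => ‖μ‖) '' spectrum ℂ g)) ∧
      sSup ((fun μ : ℂ => ‖μ‖) '' spectrum ℂ f) ≤ sSup ((fun μ : ℂ => ‖μ‖) '' spectrum ℂ g) := by
  have hm0 : 0 < m := by linarith
  have hma : 0 < m - α := by linarith
  set c : ℝ := m / (m - α) with hc
  have hc1 : 1 ≤ c := by rw [hc, le_div_iff₀ hma]; linarith
  have hc0 : (c : ℂ) ≠ 0 := by
    have : c ≠ 0 := by linarith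
    exact_mod_cast this
  -- spectrum transfer
  have hsub : ∀ μ : ℂ, μ ∈ spectrum ℂ g → ((1 - c : ℝ) : ℂ) + c * μ ∈ spectrum ℂ f := by
    intro μ hμ
    rw [← Module.End.hasEigenvalue_iff_mem_spectrum] at hμ ⊢
    obtain ⟨v, hv⟩ := hμ.exists_hasEigenvector
    refine Module.End.hasEigenvalue_of_hasEigenvector (x := v) ?_
    rw [Module.End.hasEigenvector_iff, Module.End.mem_eigenspace_iff]
    refine ⟨?_, hv.2⟩
    rw [hfg, hv.apply_eq_smul, smul_smul, ← add_smul]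
  have hsup : ∀ ν : ℂ, ν ∈ spectrum ℂ f → ∃ μ ∈ spectrum ℂ g, ν = ((1 - c : ℝ) : ℂ) + c * μ := by
    intro ν hν
    rw [← Module.End.hasEigenvalue_iff_mem_spectrum] at hν
    obtain ⟨v, hv⟩ := hν.exists_hasEigenvector
    refine ⟨(ν - ((1 - c : ℝ) : ℂ)) / c, ?_, by field_simp; ring⟩
    rw [← Module.End.hasEigenvalue_iff_mem_spectrum]
    refine Module.End.hasEigenvalue_of_hasEigenvector (x := v) ?_
    rw [Module.End.hasEigenvector_iff, Module.End.mem_eigenspace_iff]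
    refine ⟨?_, hv.2⟩
    have h1 := hfg v
    rw [hv.apply_eq_smul] at h1
    have h2 : (c : ℂ) • g v = (ν - ((1 - c : ℝ) : ℂ)) • v := by
      rw [sub_smul, h1]; abel
    rw [div_eq_inv_mul, mul_smul, ← h2, smul_smul, inv_mul_cancel₀ hc0, one_smul]
  have hne : (spectrum ℂ g).Nonempty := spectrum.nonempty_of_isAlgClosed_of_finiteDimensional ℂ g
  have hfin : ((fun μ : ℂ => ‖μ‖) '' spectrum ℂ g).Finite := (Module.End.finite_spectrum g).image _
  obtain ⟨μ0, hμ0, hμ0r⟩ := (hne.image (fun μ : ℂ => ‖μ‖)).csSup_mem hfin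
  set r := sSup ((fun μ : ℂ => ‖μ‖) '' spectrum ℂ g) with hr
  have hle : ∀ μ ∈ spectrum ℂ g, ‖μ‖ ≤ r := fun μ hμ => le_csSup hfin.bddAbove ⟨μ, hμ, rfl⟩
  obtain ⟨s0, hs00, hs01, hs0⟩ := hg μ0 hμ0
  have hrs : r = s0 := by
    rw [← hμ0r, hs0]
    simp [abs_of_nonneg hs00]
  have hlow : c - 1 ≤ 1 - c + c * r := by
    have h1 : c * (2 * α / m) ≤ c * r := by gcongr
    have h2 : c * (2 * α / m) = 2 * (c - 1) := by
      rw [hc]; field_simp; ring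
    linarith
  have hgreat : IsGreatest ((fun μ : ℂ => ‖μ‖) '' spectrum ℂ f) (1 - c + c * r) := by
    constructor
    · refine ⟨_, hsub μ0 hμ0, ?_⟩
      rw [hs0, ← hrs]
      have : ((1 - c : ℝ) : ℂ) + c * (r : ℂ) = ((1 - c + c * r : ℝ) : ℂ) := by push_cast; ring
      simp only [this, Complex.norm_real]
      rw [Real.norm_of_nonneg (by linarith)]
    · rintro _ ⟨ν, hν, rfl⟩
      obtain ⟨μ, hμ, rfl⟩ := hsup ν hν
      have hμr := hle μ hμ
      obtain ⟨s, h0, h1, rfl⟩ := hg μ hμ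
      have : ((1 - c : ℝ) : ℂ) + c * (s : ℂ) = ((1 - c + c * s : ℝ) : ℂ) := by push_cast; ring
      simp only [this, Complex.norm_real, Real.norm_eq_abs] at hμr ⊢
      rw [abs_of_nonneg h0] at hμr
      rw [abs_le]
      constructor <;> nlinarith
  rw [hgreat.csSup_eq]
  constructor
  · ring
  · nlinarith


/-- Global rate comparison: with `w*` an interior global maximizer, if `r(0) ≥ 2α/m`, then
`1 − r(α) = (m/(m−α))(1 − r(0))`, and consequently `r(α) ≤ r(0)`. -/
theorem stmt_7 {n m : ℕ} (hm : 2 ≤ m) (hnm : m ≤ n)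
    (x : Fin n → Fin m → ℝ) (hrank : (Matrix.of x).rank = m)
    (α : ℝ) (hα0 : 0 ≤ α) (hαm : α < m)
    (wstar : Fin n → ℝ) (hpos : ∀ i, 0 < wstar i) (hsum : ∑ i, wstar i = 1)
    (hopt : ∀ v : Fin n → ℝ, (∀ i, 0 ≤ v i) → ∑ i, v i = 1 →
      (Mmat x v).det ≤ (Mmat x wstar).det)
    (Rα R0 : Matrix (Fin n) (Fin n) ℝ)
    (hRα : HasFDerivAt (Talg x α)
      (LinearMap.toContinuousLinearMap (Matrix.toLin' Rα)) wstar)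
    (hR0 : HasFDerivAt (Talg x 0)
      (LinearMap.toContinuousLinearMap (Matrix.toLin' R0)) wstar)
    (hmapα : ∀ γ ∈ Gam n, Matrix.toLin' (Rα.map (Complex.ofReal : ℝ → ℂ)) γ ∈ Gam n)
    (hmap0 : ∀ γ ∈ Gam n, Matrix.toLin' (R0.map (Complex.ofReal : ℝ → ℂ)) γ ∈ Gam n)
    (hbig : 2 * α / m ≤ globalRate R0 hmap0) :
    1 - globalRate Rα hmapα = ((m : ℝ) / ((m : ℝ) - α)) * (1 - globalRate R0 hmap0) ∧
      globalRate Rα hmapα ≤ globalRate R0 hmap0 := by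
  have hdet := (Mmat_posDef x hrank wstar hpos).det_pos
  have hu : IsUnit (Mmat x wstar).det := hdet.ne'.isUnit
  have hd := gker_diag hm x hrank wstar hpos hsum hopt
  have hR := R0_entry hm x wstar hu hd R0 hR0
  have hRa := Ralpha_eq hm x wstar α hαm Rα R0 hRα hR0
  have : Nontrivial (Gam n) := Gam_nontrivial (by omega)
  refine rate_abstract _ _ (m : ℝ) α hα0 hαm ?_ ?_ hbig
  · intro v
    apply Subtype.ext
    simp only [LinearMap.coe_restrict_apply, Submodule.coe_add, Submodule.coe_smul]
    rw [hRa]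
    have : ((1 - (m:ℝ) / (m - α)) • (1 : Matrix (Fin n) (Fin n) ℝ) + ((m:ℝ) / (m - α)) • R0).map
        (Complex.ofReal : ℝ → ℂ) = ((1 - (m:ℝ) / (m - α) : ℝ) : ℂ) • (1 : Matrix (Fin n) (Fin n) ℂ) +
        (((m:ℝ) / (m - α) : ℝ) : ℂ) • R0.map (Complex.ofReal : ℝ → ℂ) := by
      ext i j
      by_cases hij : i = j <;> simp [hij, Matrix.one_apply]
    rw [this]
    simp [Matrix.add_mulVec, Matrix.smul_mulVec]
  · intro μ hμ
    rw [← Module.End.hasEigenvalue_iff_mem_spectrum] at hμ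
    obtain ⟨v, hv⟩ := hμ.exists_hasEigenvector
    have hne : (v : Fin n → ℂ) ≠ 0 := fun h => hv.2 (Subtype.ext h)
    have hev := congrArg Subtype.val hv.apply_eq_smul
    simp only [LinearMap.coe_restrict_apply, Submodule.coe_smul, Matrix.toLin'_apply] at hev
    obtain ⟨s, hs0, hs1, hs⟩ := eig_real hm wstar hpos (gker x wstar) (gker_repr x wstar hu) hd
      (gker_symm x wstar) v hne (1 - μ) (by
        intro i
        have h1 := congrFun hev i
        simp only [Matrix.mulVec, dotProduct, Matrix.map_apply, hR, Pi.smul_apply,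
          smul_eq_mul, Complex.ofReal_sub, sub_mul, Finset.sum_sub_distrib] at h1
        have h2 : ∑ j, (((1 : Matrix (Fin n) (Fin n) ℝ) i j : ℝ) : ℂ) * (v : Fin n → ℂ) j =
            (v : Fin n → ℂ) i := by
          rw [Finset.sum_eq_single i]
          · simp
          · intro j _ hj
            simp [Matrix.one_apply_ne hj.symm]
          · simp
        rw [h2] at h1
        linear_combination -h1)
    refine ⟨1 - s, by linarith, by linarith, ?_⟩
    push_cast
    rw [← hs]
    ring
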